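/- The automorphism σ of the projective line P¹(k) given by σ([u:v]) = [v : −u − 2v] has [−1:1] as its unique fixed point; moreover every other point of P¹(k) has infinite σ-orbit, i.e., if σⁿ(p) = p for some integer n ≥ 1 then p = [−1:1]. -/

import Mathlib

/-!
Statement 8: The automorphism σ of P¹(k) given by σ([u:v]) = [v : −u−2v] has [−1:1] as its
unique fixed point; moreover every other point of P¹(k) has infinite σ-orbit: if σⁿ(p) = p
for some n ≥ 1 then p = [−1:1].  Here k is a field of characteristic 0.
-/

noncomputable section

open scoped LinearAlgebra.Projectivization

variable (k : Type*) [Field k]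

/-- The linear map `(u, v) ↦ (v, −u − 2v)` on `k²`. -/
def sigmaLin : (Fin 2 → k) →ₗ[k] (Fin 2 → k) :=
  Matrix.toLin' !![0, 1; -1, -2]

/-- The inverse linear map. -/
def sigmaLinInv : (Fin 2 → k) →ₗ[k] (Fin 2 → k) :=
  Matrix.toLin' !![-2, -1; 1, 0]

lemma sigmaLin_leftInverse :
    Function.LeftInverse (sigmaLinInv k) (sigmaLin k) := by
  intro p
  have : (!![-2, -1; 1, 0] * !![0, 1; -1, -2] : Matrix (Fin 2) (Fin 2) k) = 1 := by
    rw [Matrix.mul_fin_two, Matrix.one_fin_two]; norm_num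
  calc sigmaLinInv k (sigmaLin k p)
      = Matrix.toLin' (!![-2, -1; 1, 0] * !![0, 1; -1, -2] : Matrix (Fin 2) (Fin 2) k) p := by
        rw [Matrix.toLin'_mul]; rfl
    _ = p := by rw [this, Matrix.toLin'_one]; rfl

lemma sigmaLin_injective : Function.Injective (sigmaLin k) :=
  (sigmaLin_leftInverse k).injective

/-- The automorphism σ of the projective line `P¹(k)`, `[u:v] ↦ [v : −u − 2v]`. -/
def sigmaProj : ℙ k (Fin 2 → k) → ℙ k (Fin 2 → k) :=
  Projectivization.map (sigmaLin k) (sigmaLin_injective k)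

/-- The point `[−1 : 1]` of `P¹(k)`. -/
def fixedPt : ℙ k (Fin 2 → k) :=
  Projectivization.mk k ![-1, 1] (by
    intro h
    simpa using congrFun h 1)

/-!
The linear lift `f` of `σ` is `-1 + N` with `N (u, v) = (u + v) • (1, -1)`, so `N ^ 2 = 0` and
`f ^ n = (-1) ^ n + n (-1) ^ (n - 1) N`. Hence a nonzero `w` is an eigenvector of `f ^ n` only if
`n = 0` in `k` or `N w = 0`, and the kernel of `N` is the line `[-1 : 1]`.
-/

section Projectivization

variable {K V : Type*} [DivisionRing K] [AddCommGroup V] [Module K V]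

lemma projectivization_iterate_map (f : Module.End K V) (hf : Function.Injective f) (n : ℕ) :
    (Projectivization.map f hf)^[n] =
      Projectivization.map (f ^ n) (by rw [Module.End.coe_pow]; exact hf.iterate n) := by
  induction n with
  | zero => exact Projectivization.map_id.symm
  | succ n ih =>
    rw [Function.iterate_succ, ih, ← Projectivization.map_comp]
    rfl

lemma projectivization_map_mk_eq_self_iff {f : Module.End K V} (hf : Function.Injective f)
    {v : V} (hv : v ≠ 0) :
    Projectivization.map f hf (.mk K v hv) = .mk K v hv ↔ ∃ a : K, f v = a • v := by
  simp only [Projectivization.map_mk, Projectivization.mk_eq_mk_iff', eq_comm (b := f v)]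

end Projectivization

lemma pow_apply_of_sub_algebraMap_sq_eq_zero {R M : Type*} [CommRing R] [AddCommGroup M]
    [Module R M] {f : Module.End R M} {c : R} (h : (f - algebraMap R _ c) ^ 2 = 0) (n : ℕ)
    (v : M) : (f ^ n) v = c ^ n • v + (n * c ^ (n - 1)) • (f v - c • v) := by
  have f_sub : f (f v - c • v) = c • (f v - c • v) := by
    simpa [sq, sub_eq_zero] using LinearMap.congr_fun h v
  induction n with
  | zero => simp
  | succ n ih =>
    rw [pow_succ', Module.End.mul_apply, ih, map_add, map_smul, map_smul, f_sub]
    cases n <;> simp only [Nat.cast_zero, Nat.cast_succ, Nat.add_sub_cancel, pow_succ] <;> module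

section OneEigenvalue

variable {K V : Type*} [Field K] [AddCommGroup V] [Module K V] {f : Module.End K V} {c : K}

lemma exists_pow_apply_eq_smul_iff_of_sub_algebraMap_sq_eq_zero
    (h : (f - algebraMap K _ c) ^ 2 = 0) (hc : c ≠ 0) (n : ℕ) (v : V) :
    (∃ a : K, (f ^ n) v = a • v) ↔ (n : K) = 0 ∨ f v = c • v := by
  set N := f - algebraMap K _ c
  have N_apply : N v = f v - c • v := rfl
  have N_N : N (N v) = 0 := by simpa [sq] using LinearMap.congr_fun h v
  rw [← sub_eq_zero (a := f v), pow_apply_of_sub_algebraMap_sq_eq_zero h, ← N_apply]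
  constructor
  · rintro ⟨a, ha⟩
    by_cases N_v : N v = 0
    · exact .inr N_v
    -- Applying `N` kills the nilpotent part, which forces `a = c ^ n`.
    have a_eq : c ^ n = a := smul_left_injective K N_v (by simpa [N_N] using congrArg N ha)
    left
    simpa [a_eq, N_v, hc] using ha
  · rintro (n_eq | N_v)
    · exact ⟨c ^ n, by simp [n_eq]⟩
    · exact ⟨c ^ n, by simp [N_v]⟩

lemma projectivization_iterate_map_mk_eq_self_iff (hf : Function.Injective f)
    (h : (f - algebraMap K _ c) ^ 2 = 0) (n : ℕ) {v : V} (hv : v ≠ 0) :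
    (Projectivization.map f hf)^[n] (.mk K v hv) = .mk K v hv ↔
      (n : K) = 0 ∨ f v = c • v := by
  have hc : c ≠ 0 := by
    rintro rfl
    have f_f : f (f v) = 0 := by simpa [sq] using LinearMap.congr_fun h v
    exact hv (hf (hf (by simpa using f_f)))
  rw [projectivization_iterate_map, projectivization_map_mk_eq_self_iff,
    exists_pow_apply_eq_smul_iff_of_sub_algebraMap_sq_eq_zero h hc]

end OneEigenvalue

lemma sigmaLin_sub_neg_one_apply (v : Fin 2 → k) :
    (sigmaLin k - algebraMap k _ (-1)) v = (v 0 + v 1) • ![1, -1] := by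
  ext i
  fin_cases i <;> simp [sigmaLin, dotProduct] <;> ring

lemma sigmaLin_sub_neg_one_sq_eq_zero : (sigmaLin k - algebraMap k _ (-1)) ^ 2 = 0 := by
  refine LinearMap.ext fun v => ?_
  rw [sq, Module.End.mul_apply, sigmaLin_sub_neg_one_apply, sigmaLin_sub_neg_one_apply]
  simp

variable {k}

lemma sigmaLin_eq_neg_one_smul_iff (v : Fin 2 → k) :
    sigmaLin k v = (-1 : k) • v ↔ v 0 + v 1 = 0 := by
  have sub_eq : sigmaLin k v - (-1 : k) • v = (v 0 + v 1) • ![1, -1] :=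
    sigmaLin_sub_neg_one_apply k v
  rw [← sub_eq_zero, sub_eq, smul_eq_zero_iff_left fun h => by simpa using congrFun h 0]

lemma mk_eq_fixedPt_iff {v : Fin 2 → k} (hv : v ≠ 0) :
    Projectivization.mk k v hv = fixedPt k ↔ v 0 + v 1 = 0 := by
  rw [fixedPt, Projectivization.mk_eq_mk_iff']
  constructor
  · rintro ⟨a, rfl⟩
    simp
  · intro h
    refine ⟨v 1, ?_⟩
    ext i
    fin_cases i
    · simpa using (eq_neg_of_add_eq_zero_left h).symm
    · simp

theorem sigma_unique_fixed_point_and_infinite_orbits_general (p : ℙ k (Fin 2 → k)) (n : ℕ) :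
    (sigmaProj k)^[n] p = p ↔ (n : k) = 0 ∨ p = fixedPt k := by
  induction p with
  | h v hv =>
    rw [mk_eq_fixedPt_iff, ← sigmaLin_eq_neg_one_smul_iff]
    exact projectivization_iterate_map_mk_eq_self_iff _ (sigmaLin_sub_neg_one_sq_eq_zero k) n hv

theorem sigma_unique_fixed_point_and_infinite_orbits (k : Type*) [Field k] [CharZero k] :
    (∀ p : ℙ k (Fin 2 → k), sigmaProj k p = p ↔ p = fixedPt k) ∧
      (∀ (p : ℙ k (Fin 2 → k)) (n : ℕ), 1 ≤ n → (sigmaProj k)^[n] p = p → p = fixedPt k) := by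
  have periodic_iff := sigma_unique_fixed_point_and_infinite_orbits_general (k := k)
  exact ⟨fun p => by simpa using periodic_iff p 1, fun p n hn h =>
    ((periodic_iff p n).1 h).resolve_left (Nat.cast_ne_zero.2 (Nat.one_le_iff_ne_zero.1 hn))⟩

end
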